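/- Let 𝒰 ⊆ 𝒱 be torsion classes in mod A. The following are equivalent: (1) 𝒰 ⊊ 𝒱; (2) 𝒰⊥ ∩ 𝒱 contains a nonzero module; (3) 𝒰⊥ ∩ 𝒱 contains a brick. -/

import Mathlib

open CategoryTheory

/-- `𝒯` is a torsion class of finite-dimensional (= finitely generated) left `A`-modules:
a class of finitely generated modules, closed under isomorphism, containing `0`,
closed under quotients and closed under extensions. -/
def IsTorsionClass (A : Type) [Ring A] (𝒯 : Set (ModuleCat.{0} A)) : Prop :=
  (∀ M ∈ 𝒯, Module.Finite A M) ∧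
  (∀ M ∈ 𝒯, ∀ N : ModuleCat.{0} A, Nonempty (M ≃ₗ[A] N) → N ∈ 𝒯) ∧
  (∃ Z ∈ 𝒯, Subsingleton Z) ∧
  (∀ M ∈ 𝒯, ∀ N : ModuleCat.{0} A, ∀ f : M →ₗ[A] N, Function.Surjective f → N ∈ 𝒯) ∧
  (∀ X Y Z : ModuleCat.{0} A, X ∈ 𝒯 → Z ∈ 𝒯 →
    ∀ (f : X →ₗ[A] Y) (g : Y →ₗ[A] Z), Function.Injective f → Function.Surjective g →
      LinearMap.range f = LinearMap.ker g → Y ∈ 𝒯)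

/-- `ℱ` is a torsion-free class: closed under isomorphism, containing `0`,
closed under submodules and closed under extensions. -/
def IsTorsionFreeClass (A : Type) [Ring A] (ℱ : Set (ModuleCat.{0} A)) : Prop :=
  (∀ M ∈ ℱ, Module.Finite A M) ∧
  (∀ M ∈ ℱ, ∀ N : ModuleCat.{0} A, Nonempty (M ≃ₗ[A] N) → N ∈ ℱ) ∧
  (∃ Z ∈ ℱ, Subsingleton Z) ∧
  (∀ M ∈ ℱ, ∀ N : ModuleCat.{0} A, ∀ f : N →ₗ[A] M, Function.Injective f → N ∈ ℱ) ∧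
  (∀ X Y Z : ModuleCat.{0} A, X ∈ ℱ → Z ∈ ℱ →
    ∀ (f : X →ₗ[A] Y) (g : Y →ₗ[A] Z), Function.Injective f → Function.Surjective g →
      LinearMap.range f = LinearMap.ker g → Y ∈ ℱ)

/-- `𝒞⊥ = {Y | Hom(X,Y) = 0 for all X ∈ 𝒞}` (within finite-dimensional modules). -/
def rightPerp (A : Type) [Ring A] (𝒞 : Set (ModuleCat.{0} A)) : Set (ModuleCat.{0} A) :=
  {Y | Module.Finite A Y ∧ ∀ X ∈ 𝒞, ∀ f : X →ₗ[A] Y, f = 0}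

/-- `⊥𝒞 = {X | Hom(X,Y) = 0 for all Y ∈ 𝒞}` (within finite-dimensional modules). -/
def leftPerp (A : Type) [Ring A] (𝒞 : Set (ModuleCat.{0} A)) : Set (ModuleCat.{0} A) :=
  {X | Module.Finite A X ∧ ∀ Y ∈ 𝒞, ∀ f : X →ₗ[A] Y, f = 0}

/-- A brick: a nonzero finite-dimensional module all of whose nonzero endomorphisms
are invertible. -/
def IsBrick (A : Type) [Ring A] (B : ModuleCat.{0} A) : Prop :=
  Module.Finite A B ∧ Nontrivial B ∧ ∀ f : B →ₗ[A] B, f ≠ 0 → Function.Bijective f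

/-- `T(𝒞)`, the smallest torsion class containing `𝒞`. -/
def TgenSet (A : Type) [Ring A] (𝒞 : Set (ModuleCat.{0} A)) : Set (ModuleCat.{0} A) :=
  {X | ∀ 𝒯, IsTorsionClass A 𝒯 → 𝒞 ⊆ 𝒯 → X ∈ 𝒯}

/-- `T(B)`, the smallest torsion class containing the module `B`. -/
def Tgen (A : Type) [Ring A] (B : ModuleCat.{0} A) : Set (ModuleCat.{0} A) :=
  TgenSet A {B}

/-- `F(B)`, the smallest torsion-free class containing the module `B`. -/
def Fgen (A : Type) [Ring A] (B : ModuleCat.{0} A) : Set (ModuleCat.{0} A) :=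
  {X | ∀ ℱ, IsTorsionFreeClass A ℱ → B ∈ ℱ → X ∈ ℱ}

/-- The join of a family of torsion classes in `tors A`: the intersection of all torsion
classes containing every member of the family. -/
def torsJoin (A : Type) [Ring A] (S : Set (Set (ModuleCat.{0} A))) : Set (ModuleCat.{0} A) :=
  {M | ∀ 𝒲, IsTorsionClass A 𝒲 → (∀ 𝒯 ∈ S, 𝒯 ⊆ 𝒲) → M ∈ 𝒲}

/-! Over an Artinian ring, a finitely generated module `M` has a largest submodule `tM` in `𝒰`. The
preimage in `M` of a submodule of `M ⧸ tM` that belongs to `𝒰` is an extension of modules in `𝒰`,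
hence contained in `tM`, so `M ⧸ tM` lies in `𝒰⊥`. If `M` is in `𝒱` but not in `𝒰`, this quotient is
nonzero and still in `𝒱`. Inside a nonzero module of `𝒱`, a minimal nonzero submodule among those
in `𝒱` is a brick: the image of a nonzero endomorphism is again such a submodule, so the
endomorphism is onto and, by finite length, bijective. Conversely, a module in both `𝒰` and `𝒰⊥`
has zero identity map. -/

section Perp

variable {A : Type} [Ring A] {𝒞 : Set (ModuleCat.{0} A)}
  {M N : Type} [AddCommGroup M] [Module A M] [AddCommGroup N] [Module A N]

theorem mem_rightPerp_of_injective [Module.Finite A N] (hM : ModuleCat.of A M ∈ rightPerp A 𝒞)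
    (i : N →ₗ[A] M) (hi : Function.Injective i) : ModuleCat.of A N ∈ rightPerp A 𝒞 :=
  ⟨‹Module.Finite A N›, fun X hX f ↦ (LinearMap.cancel_left hi).1 <| by
    rw [LinearMap.comp_zero]
    exact hM.2 X hX (i ∘ₗ f)⟩

theorem notMem_of_mem_rightPerp [Nontrivial M] (hM : ModuleCat.of A M ∈ rightPerp A 𝒞) :
    ModuleCat.of A M ∉ 𝒞 := fun hM' ↦
  one_ne_zero (α := Module.End A M) (hM.2 _ hM' LinearMap.id)

end Perp

/-- The torsion part `tM` of a module `M` with respect to a class `𝒯`: the sum of all submodules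
of `M` that belong to `𝒯`. When `𝒯` is a torsion class and `M` is Noetherian, it is the largest
such submodule, and dividing by it turns `M` into a module in `𝒯⊥`. -/
def torsionPart {A : Type} [Ring A] (𝒯 : Set (ModuleCat.{0} A)) (M : Type) [AddCommGroup M]
    [Module A M] : Submodule A M :=
  sSup {N | ModuleCat.of A N ∈ 𝒯}

namespace IsTorsionClass

variable {A : Type} [Ring A] {𝒯 : Set (ModuleCat.{0} A)}
  {M N P : Type} [AddCommGroup M] [Module A M] [AddCommGroup N] [Module A N]
  [AddCommGroup P] [Module A P]

theorem mem_of_surjective (h𝒯 : IsTorsionClass A 𝒯) (hM : ModuleCat.of A M ∈ 𝒯) (f : M →ₗ[A] N)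
    (hf : Function.Surjective f) : ModuleCat.of A N ∈ 𝒯 :=
  h𝒯.2.2.2.1 _ hM _ f hf

theorem mem_of_exact (h𝒯 : IsTorsionClass A 𝒯) (hM : ModuleCat.of A M ∈ 𝒯)
    (hP : ModuleCat.of A P ∈ 𝒯) {f : M →ₗ[A] N} {g : N →ₗ[A] P} (hf : Function.Injective f)
    (hg : Function.Surjective g) (hfg : Function.Exact f g) : ModuleCat.of A N ∈ 𝒯 :=
  h𝒯.2.2.2.2 _ _ _ hM hP f g hf hg hfg.linearMap_ker_eq.symm

theorem mem_of_subsingleton (h𝒯 : IsTorsionClass A 𝒯) [Subsingleton M] :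
    ModuleCat.of A M ∈ 𝒯 := by
  obtain ⟨Z, hZ, -⟩ := h𝒯.2.2.1
  exact h𝒯.mem_of_surjective hZ 0 (Function.surjective_to_subsingleton _)

theorem range_mem (h𝒯 : IsTorsionClass A 𝒯) (hM : ModuleCat.of A M ∈ 𝒯) (f : M →ₗ[A] N) :
    ModuleCat.of A (LinearMap.range f) ∈ 𝒯 :=
  h𝒯.mem_of_surjective hM f.rangeRestrict f.surjective_rangeRestrict

theorem top_mem_iff (h𝒯 : IsTorsionClass A 𝒯) :
    ModuleCat.of A (⊤ : Submodule A M) ∈ 𝒯 ↔ ModuleCat.of A M ∈ 𝒯 :=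
  ⟨fun h ↦ h𝒯.mem_of_surjective h _ Submodule.topEquiv.surjective,
    fun h ↦ h𝒯.mem_of_surjective h _ Submodule.topEquiv.symm.surjective⟩

theorem prod_mem (h𝒯 : IsTorsionClass A 𝒯) (hM : ModuleCat.of A M ∈ 𝒯)
    (hN : ModuleCat.of A N ∈ 𝒯) : ModuleCat.of A (M × N) ∈ 𝒯 :=
  h𝒯.mem_of_exact hM hN LinearMap.inl_injective LinearMap.snd_surjective .inl_snd

theorem supClosed_submodules (h𝒯 : IsTorsionClass A 𝒯) :
    SupClosed {N : Submodule A M | ModuleCat.of A N ∈ 𝒯} := by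
  intro N hN P hP
  have hrange : LinearMap.range (N.subtype.coprod P.subtype) = N ⊔ P := by
    rw [LinearMap.range_coprod, N.range_subtype, P.range_subtype]
  exact hrange ▸ h𝒯.range_mem (h𝒯.prod_mem hN hP) (N.subtype.coprod P.subtype)

theorem comap_mkQ_mem (h𝒯 : IsTorsionClass A 𝒯) {T : Submodule A M} (hT : ModuleCat.of A T ∈ 𝒯)
    {R : Submodule A (M ⧸ T)} (hR : ModuleCat.of A R ∈ 𝒯) :
    ModuleCat.of A (R.comap T.mkQ) ∈ 𝒯 := by
  refine h𝒯.mem_of_exact hT hR (f := Submodule.inclusion (T.le_comap_mkQ R))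
    (g := T.mkQ.restrict fun _ hx ↦ hx) (Submodule.inclusion_injective _) ?surjective ?exact
  case surjective =>
    rintro ⟨y, hy⟩
    obtain ⟨x, rfl⟩ := T.mkQ_surjective y
    exact ⟨⟨x, hy⟩, rfl⟩
  case exact =>
    rw [LinearMap.exact_iff, LinearMap.ker_restrict, T.ker_mkQ, T.range_inclusion]

theorem torsionPart_mem [IsNoetherian A M] (h𝒯 : IsTorsionClass A 𝒯) :
    ModuleCat.of A (torsionPart 𝒯 M) ∈ 𝒯 :=
  CompleteLattice.WellFoundedGT.isSupClosedCompact (Submodule A M) inferInstance _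
    ⟨⊥, h𝒯.mem_of_subsingleton⟩ h𝒯.supClosed_submodules

theorem torsionPart_eq_top_iff [IsNoetherian A M] (h𝒯 : IsTorsionClass A 𝒯) :
    torsionPart 𝒯 M = ⊤ ↔ ModuleCat.of A M ∈ 𝒯 :=
  ⟨fun h ↦ h𝒯.top_mem_iff.1 (h ▸ h𝒯.torsionPart_mem),
    fun h ↦ top_unique (le_sSup (h𝒯.top_mem_iff.2 h))⟩

theorem quotient_torsionPart_mem_rightPerp [IsNoetherian A M] (h𝒯 : IsTorsionClass A 𝒯) :
    ModuleCat.of A (M ⧸ torsionPart 𝒯 M) ∈ rightPerp A 𝒯 := by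
  refine ⟨inferInstanceAs (Module.Finite A (M ⧸ torsionPart 𝒯 M)),
    fun X hX (f : X →ₗ[A] M ⧸ torsionPart 𝒯 M) ↦ ?_⟩
  have hle : (LinearMap.range f).comap (torsionPart 𝒯 M).mkQ ≤ torsionPart 𝒯 M :=
    le_sSup (h𝒯.comap_mkQ_mem h𝒯.torsionPart_mem (h𝒯.range_mem hX f))
  rw [← LinearMap.range_eq_bot, eq_bot_iff, ← Submodule.mkQ_map_self (torsionPart 𝒯 M),
    ← Submodule.map_comap_eq_of_surjective (Submodule.mkQ_surjective _) (LinearMap.range f)]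
  exact Submodule.map_mono hle

theorem exists_nontrivial_mem_rightPerp_inter [IsNoetherianRing A] {𝒰 𝒱 : Set (ModuleCat.{0} A)}
    (h𝒰 : IsTorsionClass A 𝒰) (h𝒱 : IsTorsionClass A 𝒱) (h : ¬𝒱 ⊆ 𝒰) :
    ∃ M ∈ rightPerp A 𝒰 ∩ 𝒱, Nontrivial M := by
  obtain ⟨M, hM𝒱, hM𝒰⟩ := Set.not_subset.1 h
  have : Module.Finite A M := h𝒱.1 M hM𝒱
  exact ⟨ModuleCat.of A (M ⧸ torsionPart 𝒰 M),
    ⟨h𝒰.quotient_torsionPart_mem_rightPerp,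
      h𝒱.mem_of_surjective hM𝒱 _ (Submodule.mkQ_surjective _)⟩,
    Submodule.Quotient.nontrivial_iff.2 fun htop ↦ hM𝒰 (h𝒰.torsionPart_eq_top_iff.1 htop)⟩

theorem isBrick_of_minimal [IsNoetherian A M] (h𝒯 : IsTorsionClass A 𝒯) {N : Submodule A M}
    (hN : Minimal (fun P : Submodule A M ↦ P ≠ ⊥ ∧ ModuleCat.of A P ∈ 𝒯) N) :
    IsBrick A (ModuleCat.of A N) := by
  refine ⟨inferInstanceAs (Module.Finite A N), N.nontrivial_iff_ne_bot.2 hN.prop.1,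
    fun (f : N →ₗ[A] N) hf ↦ ?_⟩
  have hrange_ne : LinearMap.range (N.subtype ∘ₗ f) ≠ ⊥ := fun h ↦ hf <|
    (LinearMap.cancel_left N.injective_subtype).1 <| by
      rw [LinearMap.range_eq_bot.1 h, LinearMap.comp_zero]
  have hrange_le : LinearMap.range (N.subtype ∘ₗ f) ≤ N :=
    (LinearMap.range_comp_le_range f N.subtype).trans_eq N.range_subtype
  have hle_range : N ≤ LinearMap.range (N.subtype ∘ₗ f) :=
    hN.le_of_le ⟨hrange_ne, h𝒯.range_mem hN.prop.2 _⟩ hrange_le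
  have hsurj : Function.Surjective f := fun y ↦ by
    obtain ⟨x, hx⟩ := hle_range y.2
    exact ⟨x, Subtype.ext hx⟩
  exact ⟨IsNoetherian.injective_of_surjective_endomorphism f hsurj, hsurj⟩

theorem exists_submodule_mem_isBrick [IsNoetherian A M] [IsArtinian A M] [Nontrivial M]
    (h𝒯 : IsTorsionClass A 𝒯) (hM : ModuleCat.of A M ∈ 𝒯) :
    ∃ N : Submodule A M, ModuleCat.of A N ∈ 𝒯 ∧ IsBrick A (ModuleCat.of A N) := by
  obtain ⟨N, hN⟩ := exists_minimal_of_wellFoundedLT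
    (fun P : Submodule A M ↦ P ≠ ⊥ ∧ ModuleCat.of A P ∈ 𝒯) ⟨⊤, top_ne_bot, h𝒯.top_mem_iff.2 hM⟩
  exact ⟨N, hN.prop.2, h𝒯.isBrick_of_minimal hN⟩

end IsTorsionClass

theorem strict_inclusion_iff_brick_in_perp_inter_general {A : Type} [Ring A] [IsArtinianRing A]
    {𝒰 𝒱 : Set (ModuleCat.{0} A)} (h𝒰 : IsTorsionClass A 𝒰) (h𝒱 : IsTorsionClass A 𝒱) :
    (¬𝒱 ⊆ 𝒰 ↔ ∃ M ∈ rightPerp A 𝒰 ∩ 𝒱, Nontrivial M) ∧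
    (¬𝒱 ⊆ 𝒰 ↔ ∃ B ∈ rightPerp A 𝒰 ∩ 𝒱, IsBrick A B) := by
  have not_subset_of_nontrivial : (∃ M ∈ rightPerp A 𝒰 ∩ 𝒱, Nontrivial M) → ¬𝒱 ⊆ 𝒰 :=
    fun ⟨_, ⟨hM𝒰, hM𝒱⟩, _⟩ h ↦ notMem_of_mem_rightPerp hM𝒰 (h hM𝒱)
  refine ⟨⟨h𝒰.exists_nontrivial_mem_rightPerp_inter h𝒱, not_subset_of_nontrivial⟩,
    fun h ↦ ?_, fun ⟨B, hB, hbrick⟩ ↦ not_subset_of_nontrivial ⟨B, hB, hbrick.2.1⟩⟩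
  obtain ⟨M, ⟨hM𝒰, hM𝒱⟩, _⟩ := h𝒰.exists_nontrivial_mem_rightPerp_inter h𝒱 h
  have : Module.Finite A M := hM𝒰.1
  obtain ⟨N, hN𝒱, hbrick⟩ := h𝒱.exists_submodule_mem_isBrick hM𝒱
  exact ⟨ModuleCat.of A N, ⟨mem_rightPerp_of_injective hM𝒰 N.subtype N.injective_subtype, hN𝒱⟩,
    hbrick⟩

theorem strict_inclusion_iff_brick_in_perp_inter
    (k A : Type) [Field k] [Ring A] [Algebra k A] [FiniteDimensional k A]
    (𝒰 𝒱 : Set (ModuleCat.{0} A))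
    (h𝒰 : IsTorsionClass A 𝒰) (h𝒱 : IsTorsionClass A 𝒱) (h : 𝒰 ⊆ 𝒱) :
    (𝒰 ⊂ 𝒱 ↔ ∃ M ∈ rightPerp A 𝒰 ∩ 𝒱, Nontrivial M) ∧
    (𝒰 ⊂ 𝒱 ↔ ∃ B ∈ rightPerp A 𝒰 ∩ 𝒱, IsBrick A B) := by
  have : IsArtinianRing A := .of_finite k A
  simpa only [Set.ssubset_def, h, true_and] using
    strict_inclusion_iff_brick_in_perp_inter_general h𝒰 h𝒱
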